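/- arXiv:2308.13618 — 6 statements merged into one kernel-verified Lean document; each statement's English description precedes it below -/
import Mathlib

section
/- Let f be a map which is C¹ off a closed singular set S in a compact Riemannian manifold X (for concreteness, X a compact subset of ℝ^d with the Euclidean metric), and let φ be C¹ off S with values in ℝ. Suppose there exist C > 0 and s ≥ 0 such that ‖Dφ(x)·Df(x)^{−1}‖ ≤ C·dist(x,S)^{−s} for all x ∉ S. Let b ∈ (0, s^{−1}), σ ∈ (0,1) and δ > 0. Then there exists C′ > 0 (depending only on C, b, s, σ, δ) such that whenever n ∈ ℕ is a (b,σ,δ)-hyperbolic time for a point x, the function Φ(x) = Σ_{k=0}^{n−1} φ(f^k x) satisfies ‖DΦ(x)·Df^n(x)^{−1}‖ ≤ C′. In fact one may take C′ = C″/(1 − σ^{1−bs}) for a constant C″ depending only on C and δ. -/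
/-!
Write `y j = f^j x`. The orbit segment up to a hyperbolic time `n` avoids `S`, so the chain rule
holds along it, and for `j < n` inverting the last `n - j - 1` factors of `Df^n(x)` gives
`Dφ(y j) ∘ Df^j(x) ∘ Df^n(x)⁻¹ = (Dφ(y j) ∘ Df(y j)⁻¹) ∘ (Df(y (j+1))⁻¹ ∘ ⋯ ∘ Df(y (n-1))⁻¹)`.
With `k = n - j`, the first factor is at most `C · max 1 δ^{-s} · σ^{-bsk}` (slow recurrence to `S`,
`rpow_infDist_le`) and the second is at most `σ^{k-1}` (backward contraction,
`exists_partial_inverse`). As `bs < 1`, summing over `j` gives a geometric series of ratio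
`σ^{1-bs} < 1`.
-/

open Metric Set

noncomputable section

/-- Euclidean space `ℝ^d`, a concrete compact-manifold setting. -/
abbrev Ed (d : ℕ) := EuclideanSpace ℝ (Fin d)

/-- Truncated distance to the singular set `S`:
`dist_δ(x,S) = dist(x,S)` if `dist(x,S) < δ` and `= 1` otherwise. -/
def ddist {d : ℕ} (δ : ℝ) (S : Set (Ed d)) (x : Ed d) : ℝ :=
  if Metric.infDist x S < δ then Metric.infDist x S else 1

/-- `n` is a `(b,σ,δ)`-hyperbolic time for `x`: for all `1 ≤ k ≤ n`,
`∏_{j=n−k}^{n−1} ‖Df(f^j x)⁻¹‖ ≤ σ^k` and `dist_δ(f^{n−k} x, S) ≥ σ^{bk}`.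
Here `Dfinv x` denotes the inverse of the derivative of `f` at `x`. -/
def IsHyperbolicTime {d : ℕ} (f : Ed d → Ed d) (S : Set (Ed d))
    (Dfinv : Ed d → (Ed d →L[ℝ] Ed d)) (b σ δ : ℝ) (x : Ed d) (n : ℕ) : Prop :=
  ∀ k : ℕ, 1 ≤ k → k ≤ n →
    (∏ j ∈ Finset.Ico (n - k) n, ‖Dfinv (f^[j] x)‖) ≤ σ ^ k ∧
    σ ^ (b * (k : ℝ)) ≤ ddist δ S (f^[n - k] x)

/-- If `A n` is a product `D (n-1) ∘ ⋯ ∘ D 0 ∘ A 0` and each `D i` has left inverse `L i`, then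
`L j ∘ ⋯ ∘ L (n-1)` recovers `A j` from `A n`, with norm at most the product of the norms. -/
lemma exists_partial_inverse {E : Type*} [NormedAddCommGroup E] [NormedSpace ℝ E]
    (A D L : ℕ → E →L[ℝ] E) (j n : ℕ) (hjn : j ≤ n)
    (hA : ∀ i < n, A (i + 1) = (D i).comp (A i))
    (hL : ∀ i < n, (L i).comp (D i) = ContinuousLinearMap.id ℝ E) :
    ∃ P : E →L[ℝ] E, P.comp (A n) = A j ∧ ‖P‖ ≤ ∏ i ∈ Finset.Ico j n, ‖L i‖ := by
  induction n, hjn using Nat.le_induction with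
  | base =>
    exact ⟨ContinuousLinearMap.id ℝ E, by simp, by simpa using ContinuousLinearMap.norm_id_le⟩
  | succ n hjn ih =>
    obtain ⟨P, hP, hPn⟩ := ih (fun i hi => hA i (by omega)) (fun i hi => hL i (by omega))
    refine ⟨P.comp (L n), ?_, ?_⟩
    · rw [hA n (by omega), ContinuousLinearMap.comp_assoc, ← ContinuousLinearMap.comp_assoc (L n),
        hL n (by omega), ContinuousLinearMap.id_comp, hP]
    · rw [Finset.prod_Ico_succ_top hjn]
      exact (ContinuousLinearMap.opNorm_comp_le _ _).trans (by gcongr)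

lemma notMem_of_ddist_pos {d : ℕ} {δ : ℝ} (hδ : 0 < δ) {S : Set (Ed d)} {y : Ed d}
    (h : 0 < ddist δ S y) : y ∉ S := by
  intro hy
  simp [ddist, Metric.infDist_zero_of_mem hy, hδ] at h

/-- A lower bound `a ≤ 1` on the truncated distance controls `dist^{-s}`; the factor
`max 1 δ^{-s}` accounts for points at distance at least `δ`. -/
lemma rpow_infDist_le {d : ℕ} {δ s a : ℝ} (hδ : 0 < δ) (hs : 0 ≤ s) (ha : 0 < a) (ha1 : a ≤ 1)
    {S : Set (Ed d)} {y : Ed d} (h : a ≤ ddist δ S y) :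
    Metric.infDist y S ^ (-s) ≤ max 1 (δ ^ (-s)) * a ^ (-s) := by
  have hs' : -s ≤ 0 := by linarith
  have has : 1 ≤ a ^ (-s) := Real.one_le_rpow_of_pos_of_le_one_of_nonpos ha ha1 hs'
  unfold ddist at h
  split_ifs at h with hlt
  · calc Metric.infDist y S ^ (-s) ≤ a ^ (-s) := Real.rpow_le_rpow_of_nonpos ha h hs'
      _ ≤ _ := le_mul_of_one_le_left (by positivity) (le_max_left _ _)
  · calc Metric.infDist y S ^ (-s) ≤ δ ^ (-s) :=
          Real.rpow_le_rpow_of_nonpos hδ (not_lt.mp hlt) hs'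
      _ ≤ max 1 (δ ^ (-s)) := le_max_right _ _
      _ ≤ _ := le_mul_of_one_le_right (by positivity) has

lemma geom_sum_reflect_le {r : ℝ} (h0 : 0 ≤ r) (h1 : r < 1) (n : ℕ) :
    ∑ j ∈ Finset.range n, r ^ (n - 1 - j) ≤ (1 - r)⁻¹ := by
  rw [Finset.sum_range_reflect (fun j => r ^ j) n, ← tsum_geometric_of_lt_one h0 h1]
  exact (summable_geometric_of_lt_one h0 h1).sum_le_tsum _ (fun _ _ => by positivity)

/-- Twist control at hyperbolic times. Suppose `f` and `φ` are C¹ off the closed singular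
set `S` with `‖Dφ(x)·Df(x)⁻¹‖ ≤ C·dist(x,S)^{−s}`, and let `b ∈ (0, s⁻¹)` (i.e. `b > 0`,
`b·s < 1`), `σ ∈ (0,1)`, `δ > 0`. Then there is `C′ > 0`, depending only on
`(C, s, b, σ, δ)`, such that whenever `n` is a `(b,σ,δ)`-hyperbolic time for `x`, the
Birkhoff sum `Φ = Σ_{k<n} φ∘f^k` satisfies `‖DΦ(x)·Df^n(x)⁻¹‖ ≤ C′`. -/
theorem twist_control_at_hyperbolic_times (d : ℕ) (C s b σ δ : ℝ)
    (hC : 0 < C) (hs : 0 ≤ s) (hb : 0 < b) (hbs : b * s < 1)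
    (hσ : σ ∈ Set.Ioo (0 : ℝ) 1) (hδ : 0 < δ) :
    ∃ C' > (0 : ℝ), ∀ (f : Ed d → Ed d) (φ : Ed d → ℝ) (S : Set (Ed d))
      (Dfinv : Ed d → (Ed d →L[ℝ] Ed d)),
      IsClosed S →
      (∀ x ∉ S, ContDiffAt ℝ 1 f x ∧ ContDiffAt ℝ 1 φ x) →
      (∀ x ∉ S, (fderiv ℝ f x).comp (Dfinv x) = ContinuousLinearMap.id ℝ (Ed d) ∧
        (Dfinv x).comp (fderiv ℝ f x) = ContinuousLinearMap.id ℝ (Ed d)) →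
      (∀ x ∉ S, ‖(fderiv ℝ φ x).comp (Dfinv x)‖ ≤ C * Metric.infDist x S ^ (-s)) →
      ∀ (x : Ed d) (n : ℕ), IsHyperbolicTime f S Dfinv b σ δ x n →
        ∀ Bn : Ed d →L[ℝ] Ed d,
          (fderiv ℝ (f^[n]) x).comp Bn = ContinuousLinearMap.id ℝ (Ed d) →
          Bn.comp (fderiv ℝ (f^[n]) x) = ContinuousLinearMap.id ℝ (Ed d) →
          ‖(fderiv ℝ (fun y => ∑ k ∈ Finset.range n, φ (f^[k] y)) x).comp Bn‖ ≤ C' := by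
  obtain ⟨hσ0, hσ1⟩ := hσ
  set r : ℝ := σ ^ (1 - b * s) with hr
  have hr0 : 0 < r := Real.rpow_pos_of_pos hσ0 _
  have hr1 : r < 1 := Real.rpow_lt_one hσ0.le hσ1 (by linarith)
  set K : ℝ := C * max 1 (δ ^ (-s)) * σ ^ (-(b * s)) with hK
  have hK0 : 0 < K := by positivity
  refine ⟨K * (1 - r)⁻¹, mul_pos hK0 (inv_pos.mpr (by linarith)), ?_⟩
  intro f φ S Dfinv _ hdiff hinv hbound x n hn Bn hB _
  have hdist : ∀ j < n, σ ^ (b * ((n - j : ℕ) : ℝ)) ≤ ddist δ S (f^[j] x) := by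
    intro j hj
    have := (hn (n - j) (by omega) (by omega)).2
    rwa [show n - (n - j) = j by omega] at this
  have hnot : ∀ j < n, f^[j] x ∉ S := fun j hj =>
    notMem_of_ddist_pos hδ ((Real.rpow_pos_of_pos hσ0 _).trans_le (hdist j hj))
  have hfd : ∀ j < n, DifferentiableAt ℝ f (f^[j] x) := fun j hj =>
    (hdiff _ (hnot j hj)).1.differentiableAt (by norm_num)
  have hφd : ∀ j < n, DifferentiableAt ℝ φ (f^[j] x) := fun j hj =>
    (hdiff _ (hnot j hj)).2.differentiableAt (by norm_num)
  have hit : ∀ j ≤ n, DifferentiableAt ℝ (f^[j]) x := by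
    intro j
    induction j with
    | zero => intro _; simp
    | succ j ih =>
      intro hj
      rw [Function.iterate_succ']
      exact (hfd j (by omega)).comp x (ih (by omega))
  have hchain : ∀ j < n, fderiv ℝ (f^[j + 1]) x =
      (fderiv ℝ f (f^[j] x)).comp (fderiv ℝ (f^[j]) x) := by
    intro j hj
    rw [Function.iterate_succ']
    exact fderiv_comp x (hfd j hj) (hit j hj.le)
  have hterm : ∀ j < n,
      ‖(fderiv ℝ (fun y => φ (f^[j] y)) x).comp Bn‖ ≤ K * r ^ (n - 1 - j) := by
    intro j hj
    obtain ⟨P, hP, hPn⟩ := exists_partial_inverse (fun i => fderiv ℝ (f^[i]) x)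
      (fun i => fderiv ℝ f (f^[i] x)) (fun i => Dfinv (f^[i] x)) (j + 1) n hj hchain
      (fun i hi => (hinv _ (hnot i hi)).2)
    have hPB : (fderiv ℝ (f^[j + 1]) x).comp Bn = P := by
      rw [← hP, ContinuousLinearMap.comp_assoc, hB, ContinuousLinearMap.comp_id]
    have hj1 : fderiv ℝ (f^[j]) x = (Dfinv (f^[j] x)).comp (fderiv ℝ (f^[j + 1]) x) := by
      rw [hchain j hj, ← ContinuousLinearMap.comp_assoc, (hinv _ (hnot j hj)).2,
        ContinuousLinearMap.id_comp]
    have hfac : (fderiv ℝ (fun y => φ (f^[j] y)) x).comp Bn =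
        ((fderiv ℝ φ (f^[j] x)).comp (Dfinv (f^[j] x))).comp P := by
      rw [show fderiv ℝ (fun y => φ (f^[j] y)) x =
        (fderiv ℝ φ (f^[j] x)).comp (fderiv ℝ (f^[j]) x) from
          fderiv_comp x (hφd j hj) (hit j hj.le), hj1, ← hPB]
      rfl
    obtain ⟨m, rfl⟩ : ∃ m, n = j + 1 + m := ⟨n - (j + 1), by omega⟩
    -- The contraction estimate covers only nonempty products; the empty one is `1 = σ ^ 0`.
    have hPσ : ‖P‖ ≤ σ ^ m := by
      refine hPn.trans ?_
      rcases Nat.eq_zero_or_pos m with rfl | hm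
      · simp
      · have := (hn m hm (by omega)).1
        rwa [show j + 1 + m - m = j + 1 by omega] at this
    have hd := hdist j hj
    rw [show j + 1 + m - j = m + 1 by omega] at hd
    have hM := rpow_infDist_le hδ hs (Real.rpow_pos_of_pos hσ0 _)
      (Real.rpow_le_one hσ0.le hσ1.le (by positivity)) hd
    have hexp : (σ ^ (b * ((m + 1 : ℕ) : ℝ))) ^ (-s) * σ ^ m = σ ^ (-(b * s)) * r ^ m := by
      rw [hr, ← Real.rpow_mul hσ0.le, ← Real.rpow_natCast σ m, ← Real.rpow_natCast _ m,
        ← Real.rpow_mul hσ0.le, ← Real.rpow_add hσ0, ← Real.rpow_add hσ0]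
      congr 1
      push_cast
      ring
    rw [hfac, show j + 1 + m - 1 - j = m by omega]
    calc _ ≤ ‖(fderiv ℝ φ (f^[j] x)).comp (Dfinv (f^[j] x))‖ * ‖P‖ :=
          ContinuousLinearMap.opNorm_comp_le _ _
      _ ≤ (C * (max 1 (δ ^ (-s)) * (σ ^ (b * ((m + 1 : ℕ) : ℝ))) ^ (-s))) * σ ^ m := by
          gcongr
          exact (hbound _ (hnot j hj)).trans (by gcongr)
      _ = C * max 1 (δ ^ (-s)) * ((σ ^ (b * ((m + 1 : ℕ) : ℝ))) ^ (-s) * σ ^ m) := by ring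
      _ = K * r ^ m := by rw [hexp, hK]; ring
  rw [fderiv_fun_sum (fun j hj => by
    have hj := Finset.mem_range.mp hj
    exact (hφd j hj).comp x (hit j hj.le)), ContinuousLinearMap.finsetSum_comp]
  calc _ ≤ ∑ j ∈ Finset.range n, K * r ^ (n - 1 - j) :=
        norm_sum_le_of_le _ (fun j hj => hterm j (Finset.mem_range.mp hj))
    _ ≤ K * (1 - r)⁻¹ := by
        rw [← Finset.mul_sum]
        gcongr
        exact geom_sum_reflect_le hr0.le hr1 n

end
end

section
/- Let f : [0,1] → [0,1] be the doubling map f(x) = 2x mod 1 and S = {1}. For every b > 1 there exists δ > 0 such that for every ℓ ∈ ℕ and every x ∈ Y_ℓ = (1/2 − 2^{−ℓ}, 1/2 − 2^{−(ℓ+1)}), the integer ℓ is a (b, 1/2, δ)-hyperbolic time for x with respect to f and S: for all 1 ≤ k ≤ ℓ, ∏_{j=ℓ−k}^{ℓ−1} |f′(f^j x)|^{−1} = 2^{−k} and dist_δ(f^{ℓ−k}x, 1) ≥ 2^{−bk}. -/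
/-!
Doubling sends `Y_ℓ = 1/2 − (2^{−(ℓ+1)}, 2^{−ℓ})` to `1 − (2^{−ℓ}, 2^{−(ℓ−1)})`, and each further
iterate doubles the distance to the right endpoint `1`. So for `1 ≤ j ≤ ℓ` and `k = ℓ − j` the
point `f^j x` lies in `(1 − 2^{−k}, 1 − 2^{−(k+1)})` (`dbl_iterate_mem`). Hence the orbit avoids the
discontinuity `1/2` before time `ℓ`, which makes every derivative equal to `2`, and
`dist(f^{ℓ−k} x, 1) > 2^{−(k+1)}` (`dbl_iterate_bounds`). With `δ = 2^{−(1/(b−1)+1)}` the truncated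
distance differs from `1` only when `k + 1 > 1/(b−1) + 1`, that is `k + 1 < bk`.
-/

/-- The doubling map `f(x) = 2x mod 1`. -/
noncomputable def dbl (x : ℝ) : ℝ := Int.fract (2 * x)

/-- `a_ℓ = 1/2 − 2^{−ℓ}`, so that `Y_ℓ = (a_ℓ, a_{ℓ+1})`. -/
noncomputable def aPt (ℓ : ℕ) : ℝ := 1 / 2 - ((2 : ℝ) ^ ℓ)⁻¹

/-- Truncated distance to the singular set `S = {1}`:
`dist_δ(x,1) = dist(x,1)` if `dist(x,1) < δ`, and `= 1` otherwise. -/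
noncomputable def distd (δ : ℝ) (x : ℝ) : ℝ := if dist x 1 < δ then dist x 1 else 1

lemma dbl_of_lt_half {y : ℝ} (h0 : 0 ≤ y) (h1 : y < 1 / 2) : dbl y = 2 * y :=
  Int.fract_eq_self.2 ⟨by linarith, by linarith⟩

lemma dbl_of_half_le {y : ℝ} (h0 : 1 / 2 ≤ y) (h1 : y < 1) : dbl y = 2 * y - 1 :=
  Int.fract_eq_iff.2 ⟨by linarith, by linarith, 1, by push_cast; ring⟩

lemma deriv_dbl {y : ℝ} (h0 : 0 < y) (h1 : y < 1) (h : y ≠ 1 / 2) : deriv dbl y = 2 := by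
  have hlin : HasDerivAt (fun z : ℝ => 2 * z) 2 y := by
    simpa using (hasDerivAt_id y).const_mul (2 : ℝ)
  rcases lt_or_gt_of_ne h with h | h
  · refine (hlin.congr_of_eventuallyEq ?_).deriv
    filter_upwards [Ioo_mem_nhds h0 h] with z hz
    exact dbl_of_lt_half hz.1.le hz.2
  · refine ((hlin.sub_const 1).congr_of_eventuallyEq ?_).deriv
    filter_upwards [Ioo_mem_nhds h h1] with z hz
    exact dbl_of_half_le hz.1.le hz.2

lemma mem_Ioo_zero_half {ℓ : ℕ} (hℓ : 1 ≤ ℓ) {x : ℝ} (hx : x ∈ Set.Ioo (aPt ℓ) (aPt (ℓ + 1))) :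
    x ∈ Set.Ioo (0 : ℝ) (1 / 2) := by
  obtain ⟨h1, h2⟩ := hx
  unfold aPt at h1 h2
  have hpos : (0 : ℝ) < ((2 : ℝ) ^ (ℓ + 1))⁻¹ := by positivity
  have hle : ((2 : ℝ) ^ ℓ)⁻¹ ≤ ((2 : ℝ) ^ 1)⁻¹ :=
    inv_anti₀ (by positivity) (pow_le_pow_right₀ (by norm_num) hℓ)
  exact ⟨by norm_num at hle h1 ⊢; linarith, by linarith⟩

/-- Starting from `Y_{i+1+k}`, the orbit has at time `i + 1` entered the dyadic interval of index `k`
at the right end of `[0,1]`. -/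
lemma dbl_iterate_mem (i k : ℕ) {x : ℝ}
    (hx : x ∈ Set.Ioo (aPt (i + 1 + k)) (aPt (i + 1 + k + 1))) :
    dbl^[i + 1] x ∈ Set.Ioo (1 - ((2 : ℝ) ^ k)⁻¹) (1 - ((2 : ℝ) ^ (k + 1))⁻¹) := by
  induction i generalizing k with
  | zero =>
    obtain ⟨h0, hh⟩ := mem_Ioo_zero_half (by omega) hx
    obtain ⟨h1, h2⟩ := hx
    rw [show 0 + 1 + k = k + 1 by omega] at h1 h2
    unfold aPt at h1 h2
    simp only [zero_add, Function.iterate_one, dbl_of_lt_half h0.le hh]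
    simp only [pow_succ, mul_inv] at h1 h2 ⊢
    constructor <;> linarith
  | succ i ih =>
    rw [show i + 1 + 1 + k = i + 1 + (k + 1) by omega] at hx
    obtain ⟨h1, h2⟩ := ih (k + 1) hx
    rw [Function.iterate_succ_apply']
    have hpos : (0 : ℝ) < ((2 : ℝ) ^ k)⁻¹ := by positivity
    have hle : ((2 : ℝ) ^ k)⁻¹ ≤ 1 := inv_le_one_of_one_le₀ (one_le_pow₀ (by norm_num))
    simp only [pow_succ, mul_inv] at h1 h2 ⊢
    rw [dbl_of_half_le (by linarith) (by linarith)]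
    constructor <;> linarith

/-- The orbit strictly before time `j + k` (that is, with `k ≥ 1`): what is needed both for the
derivative and for the distance to `1`. -/
lemma dbl_iterate_bounds (j k : ℕ) (hk : 1 ≤ k) {x : ℝ}
    (hx : x ∈ Set.Ioo (aPt (j + k)) (aPt (j + k + 1))) :
    0 < dbl^[j] x ∧ dbl^[j] x < 1 - ((2 : ℝ) ^ (k + 1))⁻¹ ∧ dbl^[j] x ≠ 1 / 2 := by
  have hle : ((2 : ℝ) ^ k)⁻¹ ≤ 1 / 2 := by
    have := inv_anti₀ (by positivity) (pow_le_pow_right₀ (one_le_two (α := ℝ)) hk)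
    simpa using this
  have hsucc : ((2 : ℝ) ^ (k + 1))⁻¹ = ((2 : ℝ) ^ k)⁻¹ / 2 := by
    rw [pow_succ, mul_inv]; ring
  rcases j with _ | i
  · obtain ⟨h0, hh⟩ := mem_Ioo_zero_half (by omega) hx
    exact ⟨h0, by simp only [Function.iterate_zero, id]; linarith, hh.ne⟩
  · obtain ⟨h1, h2⟩ := dbl_iterate_mem i k hx
    exact ⟨by linarith, h2, ne_of_gt (by linarith)⟩

/-- For every `b > 1` there is `δ > 0` such that for every `ℓ ∈ ℕ` and every
`x ∈ Y_ℓ = (1/2 − 2^{−ℓ}, 1/2 − 2^{−(ℓ+1)})`, the integer `ℓ` is a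
`(b, 1/2, δ)`-hyperbolic time for `x` with respect to the doubling map and `S = {1}`:
for all `1 ≤ k ≤ ℓ`, `∏_{j=ℓ−k}^{ℓ−1} |f′(f^j x)|⁻¹ = 2^{−k}` and
`dist_δ(f^{ℓ−k} x, 1) ≥ 2^{−bk}`. -/
theorem doubling_hyperbolic_times :
    ∀ b : ℝ, 1 < b → ∃ δ > (0 : ℝ), ∀ ℓ : ℕ, ∀ x ∈ Set.Ioo (aPt ℓ) (aPt (ℓ + 1)),
      ∀ k : ℕ, 1 ≤ k → k ≤ ℓ →
        (∏ j ∈ Finset.Ico (ℓ - k) ℓ, |deriv dbl (dbl^[j] x)|⁻¹) = ((2 : ℝ) ^ k)⁻¹ ∧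
        (2 : ℝ) ^ (-(b * (k : ℝ))) ≤ distd δ (dbl^[ℓ - k] x) := by
  intro b hb
  have hb' : 0 < b - 1 := by linarith
  refine ⟨(2 : ℝ) ^ (-(1 / (b - 1) + 1)), by positivity, ?_⟩
  intro ℓ x hx k hk hkℓ
  constructor
  · have hterm : ∀ j ∈ Finset.Ico (ℓ - k) ℓ, |deriv dbl (dbl^[j] x)|⁻¹ = (2 : ℝ)⁻¹ := by
      intro j hj
      rw [Finset.mem_Ico] at hj
      obtain ⟨m, rfl⟩ := Nat.exists_eq_add_of_lt hj.2
      obtain ⟨h0, h1, h2⟩ := dbl_iterate_bounds j (m + 1) (by omega) hx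
      have hpos : (0 : ℝ) < ((2 : ℝ) ^ (m + 1 + 1))⁻¹ := by positivity
      rw [deriv_dbl h0 (by linarith) h2, abs_two]
    rw [Finset.prod_congr rfl hterm, Finset.prod_const, Nat.card_Ico, Nat.sub_sub_self hkℓ, inv_pow]
  · obtain ⟨j, rfl⟩ := Nat.exists_eq_add_of_le' hkℓ
    rw [Nat.add_sub_cancel]
    obtain ⟨h0, h1, -⟩ := dbl_iterate_bounds j k hk hx
    have hpos : (0 : ℝ) < ((2 : ℝ) ^ (k + 1))⁻¹ := by positivity
    have hdist : dist (dbl^[j] x) 1 = 1 - dbl^[j] x := by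
      rw [Real.dist_eq, abs_sub_comm, abs_of_pos (by linarith)]
    have hpow : ((2 : ℝ) ^ (k + 1))⁻¹ = (2 : ℝ) ^ (-((k : ℝ) + 1)) := by
      rw [Real.rpow_neg (by norm_num)]
      congr 1
      exact_mod_cast (Real.rpow_natCast 2 (k + 1)).symm
    unfold distd
    split_ifs with hδ
    · rw [hdist] at hδ ⊢
      have hlt : (2 : ℝ) ^ (-((k : ℝ) + 1)) < (2 : ℝ) ^ (-(1 / (b - 1) + 1)) := by
        rw [← hpow]; linarith
      rw [Real.rpow_lt_rpow_left_iff (by norm_num)] at hlt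
      have hk1 : 1 < (k : ℝ) * (b - 1) := (div_lt_iff₀ hb').1 (by linarith)
      calc (2 : ℝ) ^ (-(b * (k : ℝ))) ≤ (2 : ℝ) ^ (-((k : ℝ) + 1)) :=
            Real.rpow_le_rpow_of_exponent_le (by norm_num) (by linarith)
        _ ≤ 1 - dbl^[j] x := by rw [← hpow]; linarith
    · refine Real.rpow_le_one_of_one_le_of_nonpos (by norm_num) ?_
      have : 0 ≤ b * (k : ℝ) := by positivity
      linarith
end

section
/- Let f : [0,1] → [0,1] be the doubling map f(x) = 2x mod 1, and for ℓ ∈ ℕ let Y_ℓ = (1/2 − 2^{−ℓ}, 1/2 − 2^{−(ℓ+1)}). Then for every ℓ, every x ∈ Y_ℓ and every 1 ≤ k < ℓ, the distance from f^{ℓ−k}(x) to 1 satisfies dist(f^{ℓ−k}x, 1) ≥ (1/2)·2^{−k}; moreover for k = ℓ one has dist(x,1) ≥ 1/2. -/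
/-- Near the right endpoint, doubling modulo `1` doubles the distance to `1`. -/
lemma dbl_one_sub (e : ℝ) (h0 : 0 < e) (h1 : 2 * e ≤ 1) : dbl (1 - e) = 1 - 2 * e := by
  unfold dbl
  rw [Int.fract_eq_iff]
  exact ⟨by linarith, by linarith, 1, by push_cast; ring⟩

lemma iterate_dbl_half_sub (d : ℝ) (h0 : 0 < d) (n : ℕ) (h1 : 2 ^ (n + 1) * d ≤ 1) :
    dbl^[n + 1] (1 / 2 - d) = 1 - 2 ^ (n + 1) * d := by
  induction n with
  | zero =>
    norm_num at h1
    simp only [zero_add, Function.iterate_one, pow_one, dbl]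
    rw [Int.fract_eq_iff]
    exact ⟨by linarith, by linarith, 0, by push_cast; ring⟩
  | succ n ih =>
    have hp : 0 < 2 ^ (n + 1) * d := by positivity
    have h2 : 2 * (2 ^ (n + 1) * d) ≤ 1 := by rw [pow_succ] at h1; linarith
    rw [Function.iterate_succ_apply', ih (by linarith), dbl_one_sub _ hp h2]
    ring

/-- For the doubling map and `Y_ℓ = (1/2 − 2^{−ℓ}, 1/2 − 2^{−(ℓ+1)})`: for every `ℓ`,
every `x ∈ Y_ℓ` and every `1 ≤ k < ℓ` one has `dist(f^{ℓ−k} x, 1) ≥ (1/2)·2^{−k}`;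
moreover for `k = ℓ` one has `dist(x,1) ≥ 1/2`. -/
theorem dist_iterate_doubling_to_one (ℓ : ℕ) (x : ℝ) (hx : x ∈ Set.Ioo (aPt ℓ) (aPt (ℓ + 1))) :
    (∀ k : ℕ, 1 ≤ k → k < ℓ → (1 / 2 : ℝ) * ((2 : ℝ) ^ k)⁻¹ ≤ dist (dbl^[ℓ - k] x) 1) ∧
    (1 / 2 : ℝ) ≤ dist x 1 := by
  obtain ⟨hl, hr⟩ := hx
  unfold aPt at hl hr
  obtain ⟨d, rfl⟩ : ∃ d, x = 1 / 2 - d := ⟨1 / 2 - x, by ring⟩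
  have hlo : ((2 : ℝ) ^ (ℓ + 1))⁻¹ < d := by linarith
  have hhi : d < ((2 : ℝ) ^ ℓ)⁻¹ := by linarith
  have hd : 0 < d := lt_trans (by positivity) hlo
  constructor
  · intro k _ hk
    obtain ⟨n, rfl⟩ : ∃ n, ℓ = n + 1 + k := ⟨ℓ - k - 1, by omega⟩
    rw [Nat.add_sub_cancel]
    have hp : (0 : ℝ) < 2 ^ (n + 1) := by positivity
    have hup : 2 ^ (n + 1) * d ≤ 1 := by
      have hle : ((2 : ℝ) ^ (n + 1 + k))⁻¹ ≤ ((2 : ℝ) ^ (n + 1))⁻¹ := by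
        gcongr
        · norm_num
        · omega
      calc 2 ^ (n + 1) * d ≤ 2 ^ (n + 1) * ((2 : ℝ) ^ (n + 1))⁻¹ := by gcongr; linarith
        _ = 1 := mul_inv_cancel₀ hp.ne'
    have hlow : (1 / 2 : ℝ) * ((2 : ℝ) ^ k)⁻¹ ≤ 2 ^ (n + 1) * d := by
      calc (1 / 2 : ℝ) * ((2 : ℝ) ^ k)⁻¹ = 2 ^ (n + 1) * ((2 : ℝ) ^ (n + 1 + k + 1))⁻¹ := by
            rw [pow_succ _ (n + 1 + k), pow_add _ (n + 1) k]
            field_simp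
        _ ≤ 2 ^ (n + 1) * d := by gcongr
    rw [iterate_dbl_half_sub d hd n hup, dist_comm, Real.dist_eq]
    exact le_trans (by linarith) (le_abs_self _)
  · rw [dist_comm, Real.dist_eq]
    exact le_trans (by linarith) (le_abs_self _)
end

section
/- Let f : [0,1) → [0,1) be the doubling map, Y = (0,1/2), Y_ℓ = (1/2 − 2^{−ℓ}, 1/2 − 2^{−(ℓ+1)}) for ℓ ∈ ℕ, R(x) = ℓ for x ∈ Y_ℓ, F(x) = f^{R(x)}(x), and let a ∈ (0,1) and φ(x) = (1−x)^a. Define the induced fibre map Φ : Y → ℝ by Φ(x) = Σ_{k=0}^{R(x)−1} φ(f^k x). Then Φ is not cohomologous to a function constant on each Y_ℓ: there is no C¹ function ψ : Y → ℝ such that Φ − ψ + ψ∘F is constant on each set Y_ℓ (equivalently, extending continuously to each closure of Y_ℓ, no such ψ exists). -/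
open Filter Topology

/-- The inverse branch of the induced map `F` from `Y = (0, 1/2)` onto `Y_{m+1}`. -/
noncomputable def invBranch (m : ℕ) (z : ℝ) : ℝ := 1 / 2 - (1 - z) / 2 ^ (m + 1)

/-- The cohomological equation on each `Y_ℓ`, `ℓ ≥ 1`, with constants `c ℓ` possibly depending
on `ℓ`. -/
def CohomEq (a : ℝ) (ψ : ℝ → ℝ) : Prop :=
  ∀ ℓ : ℕ, 1 ≤ ℓ → ∃ c : ℝ, ∀ x ∈ Set.Ioo (aPt ℓ) (aPt (ℓ + 1)),
    (∑ k ∈ Finset.range ℓ, (1 - dbl^[k] x) ^ a) - ψ x + ψ (dbl^[ℓ] x) = c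

lemma dbl_of_two_mul_eq {x t : ℝ} (n : ℤ) (h : 2 * x = n + (1 - t)) (h0 : 0 < t) (h1 : t ≤ 1) :
    dbl x = 1 - t := by
  rw [dbl, h, Int.fract_intCast_add, Int.fract_eq_self]
  constructor <;> linarith

lemma dbl_iterate_half_sub {y : ℝ} (hy : 0 < y) (k : ℕ) (hk : 2 ^ (k + 1) * y ≤ 1) :
    dbl^[k + 1] (1 / 2 - y) = 1 - 2 ^ (k + 1) * y := by
  induction k with
  | zero =>
    rw [zero_add, Function.iterate_one]
    exact dbl_of_two_mul_eq 0 (by push_cast; ring) (by positivity) hk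
  | succ k ih =>
    have hpos : 0 < 2 ^ (k + 1) * y := by positivity
    have hs : (2 : ℝ) ^ (k + 1 + 1) * y = 2 * (2 ^ (k + 1) * y) := by ring
    rw [Function.iterate_succ_apply', ih (by linarith)]
    exact dbl_of_two_mul_eq 1 (by push_cast; ring) (by positivity) hk

lemma invBranch_mem {z : ℝ} (hz : z ∈ Set.Ioo (0 : ℝ) (1 / 2)) (m : ℕ) :
    invBranch m z ∈ Set.Ioo (aPt (m + 1)) (aPt (m + 1 + 1)) := by
  obtain ⟨h0, h1⟩ := hz
  have hp : (0 : ℝ) < (2 ^ (m + 1))⁻¹ := by positivity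
  have e : ((2 : ℝ) ^ (m + 1 + 1))⁻¹ = (2 ^ (m + 1))⁻¹ / 2 := by
    rw [pow_succ _ (m + 1), mul_inv]; ring
  simp only [invBranch, aPt, Set.mem_Ioo, e, div_eq_mul_inv (1 - z)]
  constructor <;> nlinarith

lemma dbl_iterate_invBranch {z : ℝ} (hz : z ∈ Set.Ioo (0 : ℝ) (1 / 2)) {m k : ℕ} (hk : k ≤ m) :
    dbl^[k + 1] (invBranch m z) = 1 - 2 ^ k / 2 ^ m * (1 - z) := by
  obtain ⟨h0, h1⟩ := hz
  have e : (2 : ℝ) ^ (k + 1) * ((1 - z) / 2 ^ (m + 1)) = 2 ^ k / 2 ^ m * (1 - z) := by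
    field_simp; ring
  have hle : (2 : ℝ) ^ k / 2 ^ m ≤ 1 :=
    div_le_one_of_le₀ (pow_le_pow_right₀ (by norm_num) hk) (by positivity)
  have hy : 0 < (1 - z) / 2 ^ (m + 1) := div_pos (by linarith) (by positivity)
  rw [invBranch, dbl_iterate_half_sub hy k, e]
  rw [e]
  nlinarith

lemma one_lt_two_rpow {a : ℝ} (ha : 0 < a) : (1 : ℝ) < 2 ^ a :=
  Real.one_lt_rpow (by norm_num) ha

/-- The geometric sum of the terms `k = 1, …, m` of the induced fibre map on `Y_{m+1}`. -/
lemma sum_scaled_rpow {a : ℝ} (ha : 0 < a) {t : ℝ} (ht : 0 ≤ t) (m : ℕ) :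
    ∑ k ∈ Finset.range m, ((2 : ℝ) ^ k / 2 ^ m * t) ^ a
      = (1 - (((2 : ℝ) ^ a)⁻¹) ^ m) * (1 / (2 ^ a - 1)) * t ^ a := by
  have h1 := one_lt_two_rpow ha
  have hterm : ∀ k ∈ Finset.range m, ((2 : ℝ) ^ k / 2 ^ m * t) ^ a
      = ((2 : ℝ) ^ a) ^ k * ((((2 : ℝ) ^ a)⁻¹) ^ m * t ^ a) := by
    intro k _
    rw [Real.mul_rpow (by positivity) ht, Real.div_rpow (by positivity) (by positivity),
      ← Real.rpow_pow_comm (by norm_num), ← Real.rpow_pow_comm (by norm_num), inv_pow]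
    ring
  rw [Finset.sum_congr rfl hterm, ← Finset.sum_mul, geom_sum_eq h1.ne']
  have h2 : (2 : ℝ) ^ a - 1 ≠ 0 := by linarith
  have h3 : (2 : ℝ) ^ a ≠ 0 := by positivity
  rw [inv_pow]
  field_simp

/-- The cohomological equation on `Y_{m+1}`, pulled back to `Y` by the inverse branch. -/
lemma branch_equation {a : ℝ} (ha : 0 < a) {ψ : ℝ → ℝ} (H : CohomEq a ψ) (m : ℕ) :
    ∃ c : ℝ, ∀ z ∈ Set.Ioo (0 : ℝ) (1 / 2),
      (1 - invBranch m z) ^ a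
        + (1 - (((2 : ℝ) ^ a)⁻¹) ^ m) * (1 / (2 ^ a - 1)) * (1 - z) ^ a
        - ψ (invBranch m z) + ψ z = c := by
  obtain ⟨c, hc⟩ := H (m + 1) (by omega)
  refine ⟨c, fun z hz => ?_⟩
  have h := hc _ (invBranch_mem hz m)
  rw [Finset.sum_range_succ', dbl_iterate_invBranch hz le_rfl] at h
  have hsum : ∑ k ∈ Finset.range m, (1 - dbl^[k + 1] (invBranch m z)) ^ a
      = ∑ k ∈ Finset.range m, ((2 : ℝ) ^ k / 2 ^ m * (1 - z)) ^ a := by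
    refine Finset.sum_congr rfl fun k hk => ?_
    rw [dbl_iterate_invBranch hz (Finset.mem_range.mp hk).le, sub_sub_cancel]
  rw [hsum, sum_scaled_rpow ha (by linarith [hz.2]), div_self (by positivity), one_mul,
    sub_sub_cancel, Function.iterate_zero, id] at h
  linarith

/-- The equation on `Y_2` expresses `ψ` near `1/2` through `ψ` near the interior point `3/8`. -/
lemma exists_left_limit {a : ℝ} (ha : 0 < a) {ψ : ℝ → ℝ} (H : CohomEq a ψ)
    (hψ : ContinuousOn ψ (Set.Ioo 0 (1 / 2))) :
    ∃ L : ℝ, Tendsto ψ (𝓝[<] (1 / 2)) (𝓝 L) := by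
  obtain ⟨c, hc⟩ := branch_equation ha H 1
  have hval : invBranch 1 (1 / 2) = 3 / 8 := by norm_num [invBranch]
  have hψc : ContinuousAt ψ (invBranch 1 (1 / 2)) := by
    rw [hval]
    exact hψ.continuousAt (Ioo_mem_nhds (by norm_num) (by norm_num))
  have hb : ContinuousAt (invBranch 1) (1 / 2) := by
    unfold invBranch
    fun_prop
  have hcomp : ContinuousAt (fun z => ψ (invBranch 1 z)) (1 / 2) :=
    ContinuousAt.comp (g := ψ) hψc hb
  have hp1 : ContinuousAt (fun z => (1 - invBranch 1 z) ^ a) (1 / 2) :=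
    (continuousAt_const.sub hb).rpow_const (Or.inr ha.le)
  have hp2 : ContinuousAt (fun z : ℝ => (1 - z) ^ a) (1 / 2) :=
    (continuousAt_const.sub continuousAt_id).rpow_const (Or.inr ha.le)
  have hG : ContinuousAt (fun z => c - (1 - invBranch 1 z) ^ a
      - (1 - (((2 : ℝ) ^ a)⁻¹) ^ 1) * (1 / (2 ^ a - 1)) * (1 - z) ^ a
      + ψ (invBranch 1 z)) (1 / 2) :=
    ((continuousAt_const.sub hp1).sub (continuousAt_const.mul hp2)).add hcomp
  refine ⟨_, (hG.tendsto.mono_left nhdsWithin_le_nhds).congr' ?_⟩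
  filter_upwards [Ioo_mem_nhdsLT (show (0 : ℝ) < 1 / 2 by norm_num)] with z hz
  linarith [hc z hz]

lemma tendsto_invBranch {z : ℝ} (hz : z < 1) :
    Tendsto (fun m => invBranch m z) atTop (𝓝[<] (1 / 2)) := by
  refine tendsto_nhdsWithin_iff.mpr ⟨?_, Eventually.of_forall fun m => ?_⟩
  · have h : Tendsto (fun m : ℕ => (1 - z) / (2 : ℝ) ^ (m + 1)) atTop (𝓝 0) :=
      ((tendsto_pow_atTop_atTop_of_one_lt (by norm_num : (1 : ℝ) < 2)).comp
        (tendsto_add_atTop_nat 1)).const_div_atTop _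
    simpa only [invBranch, sub_zero] using h.const_sub (1 / 2)
  · have : 0 < (1 - z) / (2 : ℝ) ^ (m + 1) := div_pos (by linarith) (by positivity)
    simp only [invBranch, Set.mem_Iio]
    linarith

/-- Up to an additive constant, a continuous solution can only be `-(1 - z)^a / (2^a - 1)`. -/
lemma potential_rigid {a : ℝ} (ha : 0 < a) {ψ : ℝ → ℝ} (H : CohomEq a ψ)
    (hψ : ContinuousOn ψ (Set.Ioo 0 (1 / 2))) {z w : ℝ}
    (hz : z ∈ Set.Ioo (0 : ℝ) (1 / 2)) (hw : w ∈ Set.Ioo (0 : ℝ) (1 / 2)) :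
    1 / (2 ^ a - 1) * (1 - z) ^ a + ψ z = 1 / (2 ^ a - 1) * (1 - w) ^ a + ψ w := by
  obtain ⟨L, hL⟩ := exists_left_limit ha H hψ
  have hlim : ∀ v ∈ Set.Ioo (0 : ℝ) (1 / 2), Tendsto (fun m : ℕ => (1 - invBranch m v) ^ a
      + (1 - (((2 : ℝ) ^ a)⁻¹) ^ m) * (1 / (2 ^ a - 1)) * (1 - v) ^ a
      - ψ (invBranch m v) + ψ v) atTop
      (𝓝 ((1 - 1 / 2) ^ a + (1 - 0) * (1 / (2 ^ a - 1)) * (1 - v) ^ a - L + ψ v)) := by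
    intro v hv
    have hb := tendsto_invBranch (show v < 1 by linarith [hv.2])
    have h1 : Tendsto (fun m : ℕ => (1 - invBranch m v) ^ a) atTop (𝓝 ((1 - 1 / 2) ^ a)) :=
      ((tendsto_nhdsWithin_iff.mp hb).1.const_sub 1).rpow_const (Or.inr ha.le)
    have h2 : Tendsto (fun m : ℕ => (((2 : ℝ) ^ a)⁻¹) ^ m) atTop (𝓝 0) :=
      tendsto_pow_atTop_nhds_zero_of_lt_one (by positivity)
        (inv_lt_one_of_one_lt₀ (one_lt_two_rpow ha))
    exact ((h1.add (((h2.const_sub 1).mul_const _).mul_const _)).sub (hL.comp hb)).add_const _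
  have heq := tendsto_nhds_unique (hlim z hz) ((hlim w hw).congr fun m => by
    obtain ⟨c, hc⟩ := branch_equation ha H m
    rw [hc z hz, hc w hw])
  linarith

/-- Strict concavity of `t ↦ t^a`, as the strict decrease of `s ↦ (1 + s)^a - s^a` between
`s = 3/5` and `s = 4/5`. -/
lemma rpow_increment_lt {a : ℝ} (ha : a ∈ Set.Ioo (0 : ℝ) 1) :
    (9 / 5 : ℝ) ^ a - (4 / 5) ^ a < (8 / 5) ^ a - (3 / 5) ^ a := by
  -- Both `4/5` and `8/5` are convex combinations of `3/5` and `9/5`, with swapped weights.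
  have hc := (Real.strictConcaveOn_rpow ha.1 ha.2).2 (x := (3 / 5 : ℝ)) (y := 9 / 5)
    (by norm_num) (by norm_num) (by norm_num)
  have h1 := hc (a := 5 / 6) (b := 1 / 6) (by norm_num) (by norm_num) (by norm_num)
  have h2 := hc (a := 1 / 6) (b := 5 / 6) (by norm_num) (by norm_num) (by norm_num)
  simp only [smul_eq_mul] at h1 h2
  rw [show (5 / 6 * (3 / 5) + 1 / 6 * (9 / 5) : ℝ) = 4 / 5 by norm_num] at h1
  rw [show (1 / 6 * (3 / 5) + 5 / 6 * (9 / 5) : ℝ) = 8 / 5 by norm_num] at h2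
  linarith

/-- For the doubling map with `Y = (0,1/2)`, `Y_ℓ = (1/2 − 2^{−ℓ}, 1/2 − 2^{−(ℓ+1)})`,
first return time `R = ℓ` on `Y_ℓ`, induced map `F = f^ℓ` on `Y_ℓ`, `φ(x) = (1−x)^a` with
`a ∈ (0,1)` and induced fibre map `Φ(x) = Σ_{k=0}^{R(x)−1} φ(f^k x)`:
`Φ` is NOT cohomologous to a function constant on each `Y_ℓ`, i.e. there is no C¹
function `ψ : Y → ℝ` such that `Φ − ψ + ψ∘F` is constant on each `Y_ℓ`. -/
theorem induced_fibre_not_cohomologous (a : ℝ) (ha : a ∈ Set.Ioo (0 : ℝ) 1) :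
    ¬ ∃ ψ : ℝ → ℝ, ContDiffOn ℝ 1 ψ (Set.Ioo 0 (1 / 2)) ∧
      ∀ ℓ : ℕ, 1 ≤ ℓ → ∃ c : ℝ, ∀ x ∈ Set.Ioo (aPt ℓ) (aPt (ℓ + 1)),
        (∑ k ∈ Finset.range ℓ, (1 - dbl^[k] x) ^ a) - ψ x + ψ (dbl^[ℓ] x) = c := by
  rintro ⟨ψ, hψ, H⟩
  have hr := one_lt_two_rpow ha.1
  have hrig := fun z hz w hw => potential_rigid (z := z) (w := w) ha.1 H hψ.continuousOn hz hw
  obtain ⟨c, hc⟩ := branch_equation ha.1 H 0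
  -- Here `invBranch 0 z = z / 2`; the points `x = 1/5, 1/10` of `Y_1` correspond to
  -- `s = 1 - 2x = 3/5, 4/5`.
  have e1 := hc (2 / 5) (by constructor <;> norm_num)
  have e2 := hc (1 / 5) (by constructor <;> norm_num)
  rw [show invBranch 0 (2 / 5) = 1 / 5 by norm_num [invBranch]] at e1
  rw [show invBranch 0 (1 / 5) = 1 / 10 by norm_num [invBranch]] at e2
  have r1 := hrig (2 / 5) (by constructor <;> norm_num) (1 / 5) (by constructor <;> norm_num)
  have r2 := hrig (1 / 5) (by constructor <;> norm_num) (1 / 10) (by constructor <;> norm_num)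
  have hcc := rpow_increment_lt ha
  have m1 : (8 / 5 : ℝ) ^ a = 2 ^ a * (4 / 5) ^ a := by
    rw [← Real.mul_rpow (by norm_num) (by norm_num)]; norm_num
  have m2 : (9 / 5 : ℝ) ^ a = 2 ^ a * (9 / 10) ^ a := by
    rw [← Real.mul_rpow (by norm_num) (by norm_num)]; norm_num
  norm_num at e1 e2 r1 r2
  rw [m1, m2] at hcc
  set r : ℝ := 2 ^ a
  have hK : (r - 1)⁻¹ * (r - 1) = 1 := inv_mul_cancel₀ (by linarith)
  set K : ℝ := (r - 1)⁻¹
  set A : ℝ := (4 / 5) ^ a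
  set B : ℝ := (9 / 10) ^ a
  set C : ℝ := (3 / 5) ^ a
  -- Eliminating `ψ` and `c` leaves `(K + 1) (A - B) = K (C - A)`; multiply by `r - 1`.
  have key : (K + 1) * (A - B) = K * (C - A) := by linarith
  have key2 : r * (A - B) = C - A := by
    linear_combination (r - 1) * key + (C - A - (A - B)) * hK
  linarith
end

section
/- Let f : [0,1) → [0,1) be the doubling map, Y = (0,1/2), Y_ℓ = (1/2 − 2^{−ℓ}, 1/2 − 2^{−(ℓ+1)}), R(x) = ℓ on Y_ℓ, F = f^R, and let φ : [0,1) → ℝ be any function, with induced fibre map Φ(x) = Σ_{k=0}^{R(x)−1} φ(f^k x). If there exists a C¹ function ψ : Y → ℝ such that Φ − ψ + ψ∘F is constant on (the closure in Y of) each Y_ℓ, then evaluating along the fixed point x = 0 of F in Ȳ₁, the fixed point x′ = 1/3 of F in Ȳ₂ (with f(1/3) = 2/3), and the F-period-2 orbit y = 1/7 ∈ Y₁, y′ = F(y) = 2/7 ∈ Y₂ (with f(2/7) = 4/7, f(4/7) = 1/7), yields the identity φ(0) + φ(1/3) + φ(2/3) = φ(1/7) + φ(2/7) + φ(4/7). 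-/
theorem dbl_eq {x y : ℝ} (n : ℤ) (h : 2 * x = y + n) (h0 : 0 ≤ y) (h1 : y < 1) : dbl x = y := by
  rw [dbl, h, Int.fract_add_intCast, Int.fract_eq_self.2 ⟨h0, h1⟩]

/-- If `ψ` is a C¹ function on `Y = (0,1/2)` such that `Φ − ψ + ψ∘F` is constant on the
closure of each `Y_ℓ` (where `Φ(x) = Σ_{k<ℓ} φ(f^k x)` and `F = f^ℓ` on `Y_ℓ`), then
evaluating along the fixed point `0` of `F` in `Ȳ₁`, the fixed point `1/3` of `F` in
`Ȳ₂`, and the `F`-period-2 orbit `1/7 ∈ Y₁`, `2/7 ∈ Y₂`, yields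
`φ(0) + φ(1/3) + φ(2/3) = φ(1/7) + φ(2/7) + φ(4/7)`. -/
theorem coboundary_periodic_orbit_identity (φ ψ : ℝ → ℝ)
    (hψ : ContDiffOn ℝ 1 ψ (Set.Ioo 0 (1 / 2)))
    (hcob : ∀ ℓ : ℕ, 1 ≤ ℓ → ∃ c : ℝ, ∀ x ∈ Set.Icc (aPt ℓ) (aPt (ℓ + 1)),
      (∑ k ∈ Finset.range ℓ, φ (dbl^[k] x)) - ψ x + ψ (dbl^[ℓ] x) = c) :
    φ 0 + φ (1 / 3) + φ (2 / 3) = φ (1 / 7) + φ (2 / 7) + φ (4 / 7) := by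
  have d0 : dbl 0 = 0 := dbl_eq 0 (by norm_num) (by norm_num) (by norm_num)
  have d13 : dbl (1 / 3) = 2 / 3 := dbl_eq 0 (by norm_num) (by norm_num) (by norm_num)
  have d23 : dbl (2 / 3) = 1 / 3 := dbl_eq 1 (by norm_num) (by norm_num) (by norm_num)
  have d17 : dbl (1 / 7) = 2 / 7 := dbl_eq 0 (by norm_num) (by norm_num) (by norm_num)
  have d27 : dbl (2 / 7) = 4 / 7 := dbl_eq 0 (by norm_num) (by norm_num) (by norm_num)
  have d47 : dbl (4 / 7) = 1 / 7 := dbl_eq 1 (by norm_num) (by norm_num) (by norm_num)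
  obtain ⟨c₁, h₁⟩ := hcob 1 le_rfl
  obtain ⟨c₂, h₂⟩ := hcob 2 one_le_two
  have e0 := h₁ 0 (by constructor <;> norm_num [aPt])
  have e17 := h₁ (1 / 7) (by constructor <;> norm_num [aPt])
  have e13 := h₂ (1 / 3) (by constructor <;> norm_num [aPt])
  have e27 := h₂ (2 / 7) (by constructor <;> norm_num [aPt])
  simp only [Finset.sum_range_succ, Finset.sum_range_zero, Function.iterate_succ_apply,
    Function.iterate_zero_apply, d0, d13, d23, d17, d27, d47] at e0 e17 e13 e27
  linarith
end

section
/- Define χ : [0,1] → ℝ by χ(a) = 1 + (2/3)^a + (1/3)^a − (6/7)^a − (5/7)^a − (3/7)^a. Then χ(0) = 0, χ(1) = 0, and χ(a) < 0 for every a ∈ (0,1). -/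
/-!
The function `χ` is strictly convex on `[0,1]`, and it vanishes at both endpoints,
so it is negative in between. For the convexity, `χ''` is the signed sum of the terms
`t^a (log t)²`, and on `[0,1]` the negative terms are absorbed by the positive ones:
`(5/7)^a ≤ (15/14) (2/3)^a`, `(6/7)^a ≤ (9/7) (2/3)^a` and `(3/7)^a ≤ (9/7) (1/3)^a`, so that
`χ'' > 0` reduces to
`(15/14) log²(5/7) + (9/7) log²(6/7) < log²(2/3)` and `(9/7) log²(3/7) < log²(1/3)`
(numerically `0.152 < 0.164` and `0.923 < 1.207`), for which coarse bounds on logarithms suffice.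
-/

/-- The function `χ(a) = 1 + (2/3)^a + (1/3)^a − (6/7)^a − (5/7)^a − (3/7)^a`,
arising as `χ(a) = φ(0) + φ(1/3) + φ(2/3) − φ(1/7) − φ(2/7) − φ(4/7)` for
`φ(x) = (1−x)^a`. -/
noncomputable def chi (a : ℝ) : ℝ :=
  1 + (2 / 3 : ℝ) ^ a + (1 / 3 : ℝ) ^ a - (6 / 7 : ℝ) ^ a - (5 / 7 : ℝ) ^ a - (3 / 7 : ℝ) ^ a

lemma rpow_le_ratio_mul {s t a : ℝ} (ht : 0 < t) (hts : t ≤ s) (ha : a ≤ 1) :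
    s ^ a ≤ s / t * t ^ a := by
  have h1 : 1 ≤ s / t := (one_le_div ht).2 hts
  have h2 : s ^ a = (s / t) ^ a * t ^ a := by
    rw [← Real.mul_rpow (by positivity) ht.le, div_mul_cancel₀ _ ht.ne']
  rw [h2]
  have h3 : (s / t) ^ a ≤ s / t := by
    simpa using Real.rpow_le_rpow_of_exponent_le h1 ha
  gcongr

lemma log_sq_ineq_two_thirds :
    15 / 14 * Real.log (5 / 7) ^ 2 + 9 / 7 * Real.log (6 / 7) ^ 2 < Real.log (2 / 3) ^ 2 := by
  have e1 : Real.log (5 / 7) = -Real.log (7 / 5) := by rw [← Real.log_inv]; norm_num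
  have e2 : Real.log (6 / 7) = -Real.log (7 / 6) := by rw [← Real.log_inv]; norm_num
  have e3 : Real.log (2 / 3) = -Real.log (3 / 2) := by rw [← Real.log_inv]; norm_num
  have b1 : Real.log (7 / 5) ≤ 0.3425 := by
    rw [Real.log_le_iff_le_exp (by norm_num)]
    have := Real.quadratic_le_exp_of_nonneg (x := 0.3425) (by norm_num)
    norm_num at this ⊢; linarith
  have b2 : Real.log (7 / 6) ≤ 0.155 := by
    rw [Real.log_le_iff_le_exp (by norm_num)]
    have := Real.quadratic_le_exp_of_nonneg (x := 0.155) (by norm_num)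
    norm_num at this ⊢; linarith
  -- `exp 2 ≤ (3/2)^5`
  have b3 : 2 / 5 ≤ Real.log (3 / 2) := by
    have h : (2 : ℝ) ≤ Real.log ((3 / 2) ^ 5) := by
      rw [Real.le_log_iff_exp_le (by norm_num)]
      have h2 : Real.exp 2 = Real.exp 1 ^ 2 := by rw [← Real.exp_nat_mul]; norm_num
      rw [h2]
      have := Real.exp_one_lt_d9
      have := Real.exp_pos 1
      nlinarith
    rw [Real.log_pow] at h
    push_cast at h
    linarith
  have p1 : 0 ≤ Real.log (7 / 5) := Real.log_nonneg (by norm_num)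
  have p2 : 0 ≤ Real.log (7 / 6) := Real.log_nonneg (by norm_num)
  have q1 := pow_le_pow_left₀ p1 b1 2
  have q2 := pow_le_pow_left₀ p2 b2 2
  have q3 := pow_le_pow_left₀ (by norm_num) b3 2
  rw [e1, e2, e3, neg_sq, neg_sq, neg_sq]
  norm_num at q1 q2 q3
  linarith

lemma log_sq_ineq_one_third :
    9 / 7 * Real.log (3 / 7) ^ 2 < Real.log (1 / 3) ^ 2 := by
  have e1 : Real.log (3 / 7) = -Real.log (7 / 3) := by rw [← Real.log_inv]; norm_num
  have e2 : Real.log (1 / 3) = -Real.log 3 := by rw [← Real.log_inv]; norm_num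
  have b1 : Real.log (7 / 3) ≤ 0.87 := by
    rw [Real.log_le_iff_le_exp (by norm_num)]
    have h := Real.quadratic_le_exp_of_nonneg (x := 0.435) (by norm_num)
    have h2 : Real.exp 0.87 = Real.exp 0.435 ^ 2 := by rw [← Real.exp_nat_mul]; norm_num
    rw [h2]
    have h3 := pow_le_pow_left₀ (by norm_num) h 2
    refine le_trans ?_ h3
    norm_num
  have b2 : 1 ≤ Real.log 3 := by
    rw [Real.le_log_iff_exp_le (by norm_num)]
    linarith [Real.exp_one_lt_d9]
  have p1 : 0 ≤ Real.log (7 / 3) := Real.log_nonneg (by norm_num)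
  have q1 := pow_le_pow_left₀ p1 b1 2
  have q2 := pow_le_pow_left₀ (by norm_num) b2 2
  rw [e1, e2, neg_sq, neg_sq]
  rw [one_pow] at q2
  norm_num at q1
  linarith

/-- The `n`-th derivative of `χ` for `n ≥ 1`; the constant term `1` of `χ` contributes nothing. -/
noncomputable def chiDeriv (n : ℕ) (a : ℝ) : ℝ :=
  (2 / 3 : ℝ) ^ a * Real.log (2 / 3) ^ n + (1 / 3 : ℝ) ^ a * Real.log (1 / 3) ^ n
    - (6 / 7 : ℝ) ^ a * Real.log (6 / 7) ^ n - (5 / 7 : ℝ) ^ a * Real.log (5 / 7) ^ n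
    - (3 / 7 : ℝ) ^ a * Real.log (3 / 7) ^ n

lemma hasDerivAt_const_rpow {t : ℝ} (ht : 0 < t) (a : ℝ) :
    HasDerivAt (fun x : ℝ => t ^ x) (t ^ a * Real.log t) a :=
  (Real.hasStrictDerivAt_const_rpow ht a).hasDerivAt

lemma hasDerivAt_chi (a : ℝ) : HasDerivAt chi (chiDeriv 1 a) a := by
  have h := (((((hasDerivAt_const_rpow (t := 2 / 3) (by norm_num) a).const_add 1).add
    (hasDerivAt_const_rpow (t := 1 / 3) (by norm_num) a)).sub
    (hasDerivAt_const_rpow (t := 6 / 7) (by norm_num) a)).sub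
    (hasDerivAt_const_rpow (t := 5 / 7) (by norm_num) a)).sub
    (hasDerivAt_const_rpow (t := 3 / 7) (by norm_num) a)
  refine h.congr_deriv ?_
  simp only [chiDeriv, pow_one]

lemma hasDerivAt_chiDeriv_one (a : ℝ) : HasDerivAt (chiDeriv 1) (chiDeriv 2 a) a := by
  have h := ((((((hasDerivAt_const_rpow (t := 2 / 3) (by norm_num) a).mul_const
    (Real.log (2 / 3) ^ 1))).add
    ((hasDerivAt_const_rpow (t := 1 / 3) (by norm_num) a).mul_const (Real.log (1 / 3) ^ 1))).sub
    ((hasDerivAt_const_rpow (t := 6 / 7) (by norm_num) a).mul_const (Real.log (6 / 7) ^ 1))).sub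
    ((hasDerivAt_const_rpow (t := 5 / 7) (by norm_num) a).mul_const (Real.log (5 / 7) ^ 1))).sub
    ((hasDerivAt_const_rpow (t := 3 / 7) (by norm_num) a).mul_const (Real.log (3 / 7) ^ 1))
  refine h.congr_deriv ?_
  simp only [chiDeriv]
  ring

lemma chiDeriv_two_pos {a : ℝ} (ha : a ≤ 1) : 0 < chiDeriv 2 a := by
  have h5 : (5 / 7 : ℝ) ^ a ≤ 15 / 14 * (2 / 3 : ℝ) ^ a := by
    convert rpow_le_ratio_mul (s := 5 / 7) (t := 2 / 3) (by norm_num) (by norm_num) ha using 2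
    norm_num
  have h6 : (6 / 7 : ℝ) ^ a ≤ 9 / 7 * (2 / 3 : ℝ) ^ a := by
    convert rpow_le_ratio_mul (s := 6 / 7) (t := 2 / 3) (by norm_num) (by norm_num) ha using 2
    norm_num
  have h3 : (3 / 7 : ℝ) ^ a ≤ 9 / 7 * (1 / 3 : ℝ) ^ a := by
    convert rpow_le_ratio_mul (s := 3 / 7) (t := 1 / 3) (by norm_num) (by norm_num) ha using 2
    norm_num
  have p2 : 0 < (2 / 3 : ℝ) ^ a := by positivity
  have p1 : 0 < (1 / 3 : ℝ) ^ a := by positivity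
  have k5 := mul_le_mul_of_nonneg_right h5 (sq_nonneg (Real.log (5 / 7)))
  have k6 := mul_le_mul_of_nonneg_right h6 (sq_nonneg (Real.log (6 / 7)))
  have k3 := mul_le_mul_of_nonneg_right h3 (sq_nonneg (Real.log (3 / 7)))
  have m2 := mul_lt_mul_of_pos_left log_sq_ineq_two_thirds p2
  have m1 := mul_lt_mul_of_pos_left log_sq_ineq_one_third p1
  simp only [chiDeriv]
  linarith

lemma strictConvexOn_chi : StrictConvexOn ℝ (Set.Icc 0 1) chi := by
  refine strictConvexOn_of_deriv2_pos (convex_Icc 0 1)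
    (fun a _ => (hasDerivAt_chi a).continuousAt.continuousWithinAt) fun a ha => ?_
  rw [interior_Icc] at ha
  have h1 : deriv chi = chiDeriv 1 := funext fun x => (hasDerivAt_chi x).deriv
  simp only [Function.iterate_succ, Function.iterate_zero, Function.comp_apply, id, h1,
    (hasDerivAt_chiDeriv_one a).deriv]
  exact chiDeriv_two_pos ha.2.le

/-- `χ(0) = 0`, `χ(1) = 0`, and `χ(a) < 0` for every `a ∈ (0,1)`. -/
theorem chi_zero_eq_zero_one_eq_zero_and_neg_on_Ioo :
    chi 0 = 0 ∧ chi 1 = 0 ∧ ∀ a ∈ Set.Ioo (0 : ℝ) 1, chi a < 0 := by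
  have h0 : chi 0 = 0 := by norm_num [chi]
  have h1 : chi 1 = 0 := by norm_num [chi]
  refine ⟨h0, h1, fun a ha => ?_⟩
  have h := strictConvexOn_chi.2 (Set.left_mem_Icc.2 zero_le_one) (Set.right_mem_Icc.2 zero_le_one)
    zero_ne_one (sub_pos.2 ha.2) ha.1 (sub_add_cancel 1 a)
  simpa [h0, h1] using h
end
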